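/- Let m ≥ 1, n ≥ 1 be integers and k ∈ ℤ with k ≥ −n. Then the two rational functions w_{m,n}(z; k) = T_{m−1,n}^{(k)}(z) T_{m−1,n+1}^{(k)}(z)/(T_{m,n}^{(k)}(z) T_{m−2,n+1}^{(k)}(z)) and ŵ_{m,n+k}(z; −k) = T̂_{m−1,n+k}^{(−k)}(z) T̂_{m−1,n+k+1}^{(−k)}(z)/(T̂_{m,n+k}^{(−k)}(z) T̂_{m−2,n+k+1}^{(−k)}(z)), where T̂_{a,b}^{(ν)}(z) = T_{a,b}^{(ν)}(−z), are both solutions of P_V with the same parameters α = m²/2, β = −(m+2n+k+1)²/2, γ = k. -/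

import Mathlib

noncomputable section

open Finset

/-- Generalized binomial coefficient `C(x, k)` for real `x`. -/
def genBinom (x : ℝ) (k : ℕ) : ℝ :=
  (∏ i ∈ Finset.range k, (x - i)) / (Nat.factorial k)

/-- Associated Laguerre polynomial `L_n^{(α)}(z)`, with the convention `L_n^{(α)} = 0` for `n < 0`. -/
def lagL (n : ℤ) (α : ℝ) : ℝ → ℝ := fun z =>
  if n < 0 then 0
  else ∑ k ∈ Finset.range (n.toNat + 1),
    (-1 : ℝ) ^ k * genBinom ((n : ℝ) + α) (n.toNat - k) * z ^ k / (Nat.factorial k)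

/-- Generalised Laguerre polynomial
`T_{m,n}^{(μ)}(z) = det[(d/dz)^{j+k} L_{m+n}^{(μ+1)}(z)]_{j,k=0}^{n-1}`
(with `T_{m,0}^{(μ)} = 1`, the empty determinant). -/
def genLag (m : ℤ) (n : ℕ) (μ : ℝ) : ℝ → ℝ := fun z =>
  Matrix.det (Matrix.of fun j k : Fin n =>
    iteratedDeriv ((j : ℕ) + (k : ℕ)) (lagL (m + n) (μ + 1)) z)

/-- Wronskian `Wr(f_1, …, f_r)(z) = det[(d/dz)^{j-1} f_k(z)]`. -/
def wronskian {r : ℕ} (f : Fin r → ℝ → ℝ) : ℝ → ℝ := fun z =>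
  Matrix.det (Matrix.of fun j k : Fin r => iteratedDeriv (j : ℕ) (f k) z)

/-- The constant `c_{m,n} = (-1)^{n(2m+1+n)/2} ∏_{j=1}^n (j-1)!/(m+j)!`. -/
def cmn (m n : ℕ) : ℝ :=
  (-1 : ℝ) ^ (n * (2 * m + 1 + n) / 2) *
    ∏ j ∈ Finset.range n, (Nat.factorial j : ℝ) / (Nat.factorial (m + j + 1))

/-- `τ_{m,n}^{(μ)}(z) = det[(z d/dz)^{j+k} L_{m+n}^{(n+μ)}(z)]_{j,k=0}^{n-1}`. -/
def tauP (m : ℤ) (n : ℕ) (μ : ℝ) : ℝ → ℝ := fun z =>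
  Matrix.det (Matrix.of fun j k : Fin n =>
    ((fun (g : ℝ → ℝ) => fun t => t * deriv g t)^[(j : ℕ) + (k : ℕ)]
      (lagL (m + n) ((n : ℝ) + μ))) z)

/-- Hirota bilinear operator `D_z(f • g) = f' g - f g'`. -/
def hirota (f g : ℝ → ℝ) (z : ℝ) : ℝ := deriv f z * g z - f z * deriv g z

/-- Probabilists' Hermite polynomial `He_n` as a real function. -/
def He (n : ℕ) : ℝ → ℝ := fun z => Polynomial.aeval z (Polynomial.hermite n)

/-- The fifth Painlevé equation (with `δ = -1/2`) for `w` with parameters `(a, b, c)`,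
holding at the point `z`. -/
def PV (a b c : ℝ) (w : ℝ → ℝ) (z : ℝ) : Prop :=
  iteratedDeriv 2 w z =
    (1 / (2 * w z) + 1 / (w z - 1)) * (deriv w z) ^ 2
      - (1 / z) * deriv w z
      + (w z - 1) ^ 2 * (a * (w z) ^ 2 + b) / (z ^ 2 * w z)
      + c * w z / z
      - w z * (w z + 1) / (2 * (w z - 1))

/-- The Jimbo–Miwa–Okamoto `σ`-equation `S_V` with parameters `(ν₁, ν₂, ν₃)`,
holding at the point `z`. -/
def SV (ν₁ ν₂ ν₃ : ℝ) (σ : ℝ → ℝ) (z : ℝ) : Prop :=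
  (z * iteratedDeriv 2 σ z) ^ 2 =
    (2 * (deriv σ z) ^ 2 + (ν₁ + ν₂ + ν₃ - z) * deriv σ z + σ z) ^ 2
      - 4 * deriv σ z * (deriv σ z + ν₁) * (deriv σ z + ν₂) * (deriv σ z + ν₃)

/-!
By the Desnanot–Jacobi identity, the Hankel determinants formed from the derivatives of one
polynomial are tau functions of a Toda chain. On the other hand, along a Hamiltonian solution
`(w, p)` of `P_V` the difference `x = p - s`, where `s = (p + c) / w - m`, obeys the first equation
of a Toda chain, whose two neighbouring couplings are rational functions of the state. The Bäcklund
transformation that replaces `p` by the ratio of the next coupling to `s` moves the state one site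
along this chain, and the symmetry `w ↦ 1 / w` yields a second chain, moved along simultaneously.

The quotient of two neighbouring Laguerre polynomials solves a Riccati reduction of `P_V` with
`p = 0`. Its two chains are those of the Hankel determinants of the two Laguerre polynomials, up to
the gauge shift of the velocities by `z`. Iteration therefore expresses `w` through these
determinants. It never breaks down, since the determinants do not vanish identically and the
Bäcklund transformation keeps `w ≠ 0, 1` in the field of rational functions. Cleared of
denominators, `P_V` becomes a polynomial identity, which can be evaluated at every real point.

The second solution is the first one with `(n, k)` replaced by `(n + k, -k)` and `z` by `-z`; the
reflection restores the sign of `γ`, and `m + 2 n + k + 1` is unchanged.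
-/

section Hankel

/-- The block `M.toBlocks₁₁` bordered by one of the last two rows and one of the last two columns of
`M`: the four minors on the right of the Desnanot–Jacobi identity. -/
def minorWith {R κ : Type*} (M : Matrix (κ ⊕ Fin 2) (κ ⊕ Fin 2) R) (i j : Fin 2) :
    Matrix (κ ⊕ Unit) (κ ⊕ Unit) R :=
  M.submatrix (Sum.map id fun _ => i) (Sum.map id fun _ => j)

theorem desnanot_jacobi_of_field {K κ : Type*} [Field K] [Fintype κ] [DecidableEq κ]
    (M : Matrix (κ ⊕ Fin 2) (κ ⊕ Fin 2) K) (hM : M.toBlocks₁₁.det ≠ 0) :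
    M.det * M.toBlocks₁₁.det =
      (minorWith M 0 0).det * (minorWith M 1 1).det -
        (minorWith M 0 1).det * (minorWith M 1 0).det := by
  let _ : Invertible M.toBlocks₁₁ := Matrix.invertibleOfIsUnitDet _ (isUnit_iff_ne_zero.mpr hM)
  set schur : Matrix (Fin 2) (Fin 2) K :=
    M.toBlocks₂₂ - M.toBlocks₂₁ * ⅟M.toBlocks₁₁ * M.toBlocks₁₂
  have hminor (i j : Fin 2) : (minorWith M i j).det = M.toBlocks₁₁.det * schur i j := by
    rw [← Matrix.fromBlocks_toBlocks (minorWith M i j)]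
    exact (Matrix.det_fromBlocks₁₁ M.toBlocks₁₁ _ _ _).trans
      (congrArg _ (Matrix.det_unique (n := Unit) _))
  have hdet : M.det = M.toBlocks₁₁.det * schur.det := by
    conv_lhs => rw [← M.fromBlocks_toBlocks]
    rw [Matrix.det_fromBlocks₁₁]
  rw [hdet, Matrix.det_fin_two, hminor, hminor, hminor, hminor]
  ring

theorem desnanot_jacobi {R κ : Type*} [CommRing R] [IsDomain R] [Fintype κ] [DecidableEq κ]
    (M : Matrix (κ ⊕ Fin 2) (κ ⊕ Fin 2) R) (hM : M.toBlocks₁₁.det ≠ 0) :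
    M.det * M.toBlocks₁₁.det =
      (minorWith M 0 0).det * (minorWith M 1 1).det -
        (minorWith M 0 1).det * (minorWith M 1 0).det := by
  have hinj := IsFractionRing.injective R (FractionRing R)
  apply hinj
  simp only [map_sub, map_mul, RingHom.map_det]
  refine desnanot_jacobi_of_field ((algebraMap R (FractionRing R)).mapMatrix M) ?_
  have := (map_ne_zero_iff _ hinj).mpr hM
  rwa [RingHom.map_det] at this

section Derivation

variable {A R ι : Type*} [CommRing A] [CommRing R] [Algebra A R] (d : Derivation A R R)

lemma derivation_prod [DecidableEq ι] (s : Finset ι) (f : ι → R) :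
    d (∏ i ∈ s, f i) = ∑ i ∈ s, (∏ j ∈ s.erase i, f j) * d (f i) := by
  induction s using Finset.induction_on with
  | empty => simp
  | insert a s ha ih =>
    rw [prod_insert ha, Derivation.leibniz, ih, sum_insert ha, erase_insert ha, smul_eq_mul,
      smul_eq_mul, mul_sum, add_comm]
    refine congrArg _ (sum_congr rfl fun i hi => ?_)
    rw [erase_insert_of_ne (ne_of_mem_of_not_mem hi ha).symm,
      prod_insert fun h => ha (mem_of_mem_erase h), mul_assoc]

lemma derivation_det [Fintype ι] [DecidableEq ι] (M : Matrix ι ι R) :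
    d M.det = ∑ i, (M.updateRow i fun j => d (M i j)).det := by
  have hrow (i : ι) : (M.updateRow i fun j => d (M i j)).det =
      ∑ σ : Equiv.Perm ι, (Equiv.Perm.sign σ : ℤ) •
        ((∏ k ∈ univ.erase i, M k (σ k)) * d (M i (σ i))) := by
    rw [← Matrix.det_transpose, Matrix.det_apply]
    refine sum_congr rfl fun σ _ => congrArg _ ?_
    rw [← mul_prod_erase _ _ (mem_univ i), mul_comm]
    congr 1
    · refine prod_congr rfl fun k hk => ?_
      rw [Matrix.transpose_apply, Matrix.updateRow_ne (ne_of_mem_erase hk)]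
    · rw [Matrix.transpose_apply, Matrix.updateRow_self]
  simp_rw [hrow]
  rw [sum_comm, ← Matrix.det_transpose, Matrix.det_apply, map_sum]
  refine sum_congr rfl fun σ _ => ?_
  rw [← smul_sum, Units.smul_def, map_zsmul, derivation_prod]
  simp only [Matrix.transpose_apply]

end Derivation

variable {R : Type*} [CommRing R]

/-- The Hankel-type matrix `(g (r i + c j))` with row offsets `r` and column offsets `c`. -/
def hankelMatrix {ι : Type*} (g : ℕ → R) (r c : ι → ℕ) : Matrix ι ι R :=
  Matrix.of fun i j => g (r i + c j)

/-- The Hankel determinant `det (g (j + k))` with `0 ≤ j, k < n`. -/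
def hankelDet (g : ℕ → R) (n : ℕ) : R :=
  (hankelMatrix g ((↑) : Fin n → ℕ) (↑)).det

/-- The offsets `0, …, n - 1, k`, indexed so that the last one forms a block of its own. -/
def borderIndex (n k : ℕ) : Fin n ⊕ Unit → ℕ := Sum.elim (↑) fun _ => k

/-- The Hankel determinant of size `n + 1` whose last row and column offsets are moved to `r` and
`c`. These are the minors that arise when `hankelDet g (n + 1)` is differentiated. -/
def borderedHankelDet (g : ℕ → R) (n r c : ℕ) : R :=
  (hankelMatrix g (borderIndex n r) (borderIndex n c)).det

lemma hankelDet_zero (g : ℕ → R) : hankelDet g 0 = 1 := Matrix.det_isEmpty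

lemma hankelDet_one (g : ℕ → R) : hankelDet g 1 = g 0 := Matrix.det_unique _

lemma map_hankelDet {S : Type*} [CommRing S] (f : R →+* S) (g : ℕ → R) (n : ℕ) :
    f (hankelDet g n) = hankelDet (f ∘ g) n := f.map_det _

lemma borderedHankelDet_comm (g : ℕ → R) (n r c : ℕ) :
    borderedHankelDet g n r c = borderedHankelDet g n c r := by
  rw [borderedHankelDet, ← Matrix.det_transpose]
  congr 1
  ext i j
  simp only [hankelMatrix, Matrix.transpose_apply, Matrix.of_apply, add_comm]

lemma hankelDet_succ (g : ℕ → R) (n : ℕ) :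
    hankelDet g (n + 1) = borderedHankelDet g n n n := by
  rw [hankelDet, borderedHankelDet, ← Matrix.det_submatrix_equiv_self
    (((Equiv.refl (Fin n)).sumCongr (Equiv.ofUnique Unit (Fin 1))).trans finSumFinEquiv)]
  congr 1
  ext (i | i) (j | j) <;> simp [hankelMatrix, borderIndex]

lemma derivation_borderedHankelDet {A : Type*} [CommRing A] [Algebra A R] (d : Derivation A R R)
    {g : ℕ → R} (hg : ∀ k, d (g k) = g (k + 1)) (n c : ℕ) :
    d (borderedHankelDet g n n c) = borderedHankelDet g n (n + 1) c := by
  rw [borderedHankelDet, derivation_det, Fintype.sum_sum_type, sum_eq_zero, zero_add,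
    univ_unique, sum_singleton]
  · congr 1
    ext (i | i) j
    · rw [Matrix.updateRow_ne (by simp)]; rfl
    · rw [Matrix.updateRow_self]
      simp only [hankelMatrix, Matrix.of_apply, hg, borderIndex, Sum.elim_inr]
      congr 1; omega
  · intro k _
    obtain ⟨l, hl, hlk⟩ : ∃ l : Fin n ⊕ Unit, borderIndex n n l = k + 1 ∧ Sum.inl k ≠ l := by
      by_cases hk : (k : ℕ) + 1 < n
      · exact ⟨Sum.inl ⟨k + 1, hk⟩, rfl, by simp [Fin.ext_iff]⟩
      · exact ⟨Sum.inr (), by simp only [borderIndex, Sum.elim_inr]; omega, by simp⟩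
    refine Matrix.det_zero_of_row_eq hlk ?_
    rw [Matrix.updateRow_self, Matrix.updateRow_ne hlk.symm]
    ext j
    simp only [hankelMatrix, Matrix.of_apply, hg, hl]
    simp only [borderIndex, Sum.elim_inl]
    congr 1; omega

variable [IsDomain R]

lemma hankelDet_add_two_mul {g : ℕ → R} {n : ℕ} (h : hankelDet g n ≠ 0) :
    hankelDet g (n + 2) * hankelDet g n =
      borderedHankelDet g n n n * borderedHankelDet g n (n + 1) (n + 1) -
        borderedHankelDet g n n (n + 1) * borderedHankelDet g n (n + 1) n := by
  set index : Fin n ⊕ Fin 2 → ℕ := fun i => finSumFinEquiv i with hindex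
  have hdet : hankelDet g (n + 2) = (hankelMatrix g index index).det :=
    (Matrix.det_submatrix_equiv_self finSumFinEquiv _).symm
  have hminor (i j : Fin 2) : (minorWith (hankelMatrix g index index) i j).det =
      borderedHankelDet g n (n + i) (n + j) := by
    rw [borderedHankelDet]
    congr 1
    ext (a | a) (b | b) <;> simp [minorWith, hankelMatrix, borderIndex, hindex]
  have key := desnanot_jacobi (hankelMatrix g index index) h
  rwa [← hdet, hminor, hminor, hminor, hminor] at key

theorem toda_hankelDet {A : Type*} [CommRing A] [Algebra A R] (d : Derivation A R R) {g : ℕ → R}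
    (hg : ∀ k, d (g k) = g (k + 1)) {n : ℕ} (h : hankelDet g n ≠ 0) :
    hankelDet g (n + 2) * hankelDet g n =
      hankelDet g (n + 1) * d (d (hankelDet g (n + 1))) - d (hankelDet g (n + 1)) ^ 2 := by
  have hd : d (hankelDet g (n + 1)) = borderedHankelDet g n (n + 1) n := by
    rw [hankelDet_succ, derivation_borderedHankelDet d hg]
  rw [hankelDet_add_two_mul h, hd, borderedHankelDet_comm g n (n + 1) n,
    derivation_borderedHankelDet d hg, hankelDet_succ]
  ring

end Hankel

section Degree

open scoped Polynomial
open Polynomial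

variable {R : Type*} [CommRing R]

lemma coeff_X_mul_derivative (p : R[X]) (k : ℕ) :
    (X * derivative p).coeff k = k * p.coeff k := by
  cases k with
  | zero => simp
  | succ k => rw [coeff_X_mul, coeff_derivative, mul_comm, Nat.cast_succ]

lemma natDegree_X_mul_derivative_le (p : R[X]) :
    (X * derivative p).natDegree ≤ p.natDegree := by
  refine natDegree_le_iff_coeff_eq_zero.mpr fun k hk => ?_
  rw [coeff_X_mul_derivative, coeff_eq_zero_of_natDegree_lt hk, mul_zero]

/-- The Hankel determinant of the iterated derivatives of `f`, that is the Wronskian of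
`f, f', …, f⁽ⁿ⁻¹⁾`. For a Laguerre polynomial `f` it is a generalised Laguerre polynomial. -/
def derivHankelDet (f : R[X]) (n : ℕ) : R[X] := hankelDet (fun k => derivative^[k] f) n

lemma derivHankelDet_zero (f : R[X]) : derivHankelDet f 0 = 1 := hankelDet_zero _

lemma derivHankelDet_one (f : R[X]) : derivHankelDet f 1 = f := hankelDet_one _

variable [IsDomain R]

lemma toda_derivHankelDet {f : R[X]} {n : ℕ} (h : derivHankelDet f n ≠ 0) :
    derivHankelDet f (n + 2) * derivHankelDet f n =
      derivHankelDet f (n + 1) * derivative (derivative (derivHankelDet f (n + 1))) -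
        derivative (derivHankelDet f (n + 1)) ^ 2 :=
  toda_hankelDet derivative' (fun k => (Function.iterate_succ_apply' derivative k f).symm) h

variable [CharZero R]

lemma mul_derivative_derivative_sub_sq_ne_zero_and_natDegree {q : R[X]} {d : ℕ}
    (hq : q.natDegree = d + 1) :
    q * derivative (derivative q) - derivative q ^ 2 ≠ 0 ∧
      (q * derivative (derivative q) - derivative q ^ 2).natDegree = 2 * d := by
  set r := q * derivative (derivative q) - derivative q ^ 2 with hr
  have hXr : X * r = q * (X * derivative (derivative q)) - derivative q * (X * derivative q) := by
    rw [hr]; ring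
  have hd₁ : (derivative q).natDegree ≤ d := (natDegree_derivative_le q).trans (by omega)
  have hd₂ := (natDegree_X_mul_derivative_le (derivative q)).trans hd₁
  have hd₃ := (natDegree_X_mul_derivative_le q).trans hq.le
  have hle : (X * r).natDegree ≤ 2 * d + 1 := by
    rw [hXr]
    exact (natDegree_sub_le_of_le (natDegree_mul_le_of_le hq.le hd₂)
      (natDegree_mul_le_of_le hd₁ hd₃)).trans (by omega)
  have hcoeff : (X * r).coeff (2 * d + 1) = -((d + 1 : ℕ) * q.leadingCoeff ^ 2) := by
    rw [hXr, coeff_sub, leadingCoeff, hq]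
    nth_rw 1 [show 2 * d + 1 = (d + 1) + d by ring]
    rw [show 2 * d + 1 = d + (d + 1) by ring, coeff_mul_add_eq_of_natDegree_le hq.le hd₂,
      coeff_mul_add_eq_of_natDegree_le hd₁ hd₃, coeff_X_mul_derivative, coeff_X_mul_derivative,
      coeff_derivative]
    push_cast
    ring
  have hq0 : q ≠ 0 := by rintro rfl; simp at hq
  have hne : (X * r).coeff (2 * d + 1) ≠ 0 := by
    rw [hcoeff]
    exact neg_ne_zero.mpr (mul_ne_zero (Nat.cast_ne_zero.mpr d.succ_ne_zero)
      (pow_ne_zero 2 (leadingCoeff_ne_zero.mpr hq0)))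
  have hr0 : r ≠ 0 := by rintro h; simp [h] at hne
  refine ⟨hr0, ?_⟩
  have := natDegree_eq_of_le_of_coeff_ne_zero hle hne
  rw [natDegree_X_mul hr0] at this
  omega

lemma derivHankelDet_ne_zero_and_natDegree {f : R[X]} (hf : f ≠ 0) {n : ℕ}
    (hn : n ≤ f.natDegree + 1) :
    derivHankelDet f n ≠ 0 ∧ (derivHankelDet f n).natDegree = n * (f.natDegree + 1 - n) := by
  induction n using Nat.twoStepInduction with
  | zero => simp [derivHankelDet_zero]
  | one => simpa [derivHankelDet_one] using hf
  | more n ih₀ ih₁ =>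
    obtain ⟨h₀, hd₀⟩ := ih₀ (by omega)
    obtain ⟨-, hd₁⟩ := ih₁ (by omega)
    obtain ⟨k, hk⟩ : ∃ k, f.natDegree = n + 1 + k := Nat.exists_eq_add_of_le (by omega)
    rw [hk, show n + 1 + k + 1 - n = k + 2 by omega] at hd₀
    rw [hk, show n + 1 + k + 1 - (n + 1) = k + 1 by omega] at hd₁
    rw [hk, show n + 1 + k + 1 - (n + 2) = k by omega]
    have hmid : (derivHankelDet f (n + 1)).natDegree = n * (k + 1) + k + 1 := by rw [hd₁]; ring
    obtain ⟨hne, hdeg⟩ := mul_derivative_derivative_sub_sq_ne_zero_and_natDegree hmid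
    rw [← toda_derivHankelDet h₀] at hne hdeg
    have h₂ := left_ne_zero_of_mul hne
    rw [natDegree_mul h₂ h₀, hd₀] at hdeg
    exact ⟨h₂, by linarith⟩

end Degree

section Laguerre

open scoped Polynomial
open Polynomial

lemma succ_mul_genBinom_succ (x : ℝ) (k : ℕ) :
    (k + 1) * genBinom (x + 1) (k + 1) = (x + 1) * genBinom x k := by
  have hshift (i : ℕ) : x + 1 - ((i + 1 : ℕ) : ℝ) = x - i := by push_cast; ring
  simp only [genBinom, prod_range_succ' _ k, Nat.factorial_succ, hshift]
  push_cast
  field_simp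
  ring

lemma genBinom_succ_succ (x : ℝ) (k : ℕ) :
    genBinom (x + 1) (k + 1) = genBinom x k + genBinom x (k + 1) := by
  have hsucc : (k + 1) * genBinom x (k + 1) = (x - k) * genBinom x k := by
    simp only [genBinom, prod_range_succ _ k, Nat.factorial_succ]
    push_cast
    field_simp
  refine mul_left_cancel₀ (Nat.cast_add_one_ne_zero k : (k + 1 : ℝ) ≠ 0) ?_
  linear_combination succ_mul_genBinom_succ x k - hsucc

/-- The associated Laguerre polynomial `lagL` as an element of `ℝ[X]`, for a degree `N : ℕ`. -/
def laguerre (N : ℕ) (a : ℝ) : ℝ[X] :=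
  ∑ k ∈ range (N + 1), monomial k ((-1) ^ k * genBinom (N + a) (N - k) / k.factorial)

lemma eval_laguerre (N : ℕ) (a z : ℝ) : (laguerre N a).eval z = lagL N a z := by
  simp only [lagL, laguerre, eval_finsetSum, eval_monomial, Int.toNat_natCast, Int.cast_natCast,
    if_neg (Int.natCast_nonneg N).not_gt]
  exact sum_congr rfl fun k _ => by ring

lemma coeff_laguerre {N k : ℕ} (h : k ≤ N) (a : ℝ) :
    (laguerre N a).coeff k = (-1) ^ k * genBinom (N + a) (N - k) / k.factorial := by
  rw [laguerre, finsetSum_coeff]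
  simp only [coeff_monomial, sum_ite_eq', mem_range, Nat.lt_succ_of_le h, if_true]

lemma coeff_laguerre_of_lt {N k : ℕ} (h : N < k) (a : ℝ) : (laguerre N a).coeff k = 0 := by
  rw [laguerre, finsetSum_coeff]
  simp only [coeff_monomial, sum_ite_eq', mem_range, if_neg (not_lt.mpr (Nat.succ_le_of_lt h))]

lemma coeff_laguerre_self (N : ℕ) (a : ℝ) :
    (laguerre N a).coeff N = (-1) ^ N / N.factorial := by
  simp [coeff_laguerre le_rfl, genBinom]

lemma coeff_laguerre_self_ne_zero (N : ℕ) (a : ℝ) : (laguerre N a).coeff N ≠ 0 := by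
  rw [coeff_laguerre le_rfl]
  simp [genBinom, Nat.factorial_ne_zero]

lemma laguerre_ne_zero (N : ℕ) (a : ℝ) : laguerre N a ≠ 0 := fun h =>
  coeff_laguerre_self_ne_zero N a (by rw [h, coeff_zero])

lemma natDegree_laguerre (N : ℕ) (a : ℝ) : (laguerre N a).natDegree = N :=
  natDegree_eq_of_le_of_coeff_ne_zero
    (natDegree_le_iff_coeff_eq_zero.mpr fun _ hk => coeff_laguerre_of_lt hk a)
    (coeff_laguerre_self_ne_zero N a)

lemma X_mul_derivative_laguerre_succ (N : ℕ) (a : ℝ) :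
    X * derivative (laguerre (N + 1) a) =
      C (N + 1 : ℝ) * laguerre (N + 1) a - C (N + 1 + a) * laguerre N a := by
  ext k
  rw [coeff_sub, coeff_C_mul, coeff_C_mul, coeff_X_mul_derivative]
  rcases lt_trichotomy k (N + 1) with h | rfl | h
  · obtain ⟨j, rfl⟩ := Nat.exists_eq_add_of_le (Nat.le_of_lt_succ h)
    rw [coeff_laguerre h.le, coeff_laguerre (Nat.le_of_lt_succ h), Nat.add_sub_cancel_left,
      add_assoc k, Nat.add_sub_cancel_left]
    have habsorb := succ_mul_genBinom_succ (k + j + a) j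
    rw [show ((k + (j + 1) : ℕ) : ℝ) + a = k + j + a + 1 by push_cast; ring]
    push_cast
    linear_combination (-(-1) ^ k / (k.factorial : ℝ)) * habsorb
  · rw [coeff_laguerre_of_lt (Nat.lt_succ_self N)]
    push_cast
    ring
  · rw [coeff_laguerre_of_lt h, coeff_laguerre_of_lt (by omega)]
    ring

lemma derivative_laguerre_succ (N : ℕ) (a : ℝ) :
    derivative (laguerre (N + 1) a) = derivative (laguerre N a) - laguerre N a := by
  ext k
  rw [coeff_sub, coeff_derivative, coeff_derivative]
  rcases lt_trichotomy k N with h | rfl | h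
  · obtain ⟨j, rfl⟩ := Nat.exists_eq_add_of_le (Nat.succ_le_of_lt h)
    rw [coeff_laguerre (by omega), coeff_laguerre (by omega), coeff_laguerre (by omega),
      show k.succ + j + 1 - (k + 1) = j + 1 by omega, show k.succ + j - (k + 1) = j by omega,
      show k.succ + j - k = j + 1 by omega,
      show ((k.succ + j + 1 : ℕ) : ℝ) + a = (k.succ + j : ℕ) + a + 1 by push_cast; ring,
      genBinom_succ_succ, Nat.factorial_succ]
    push_cast
    field_simp
    ring
  · rw [coeff_laguerre_self, coeff_laguerre_self, coeff_laguerre_of_lt (Nat.lt_succ_self k),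
      Nat.factorial_succ]
    push_cast
    field_simp
    ring
  · rw [coeff_laguerre_of_lt (by omega), coeff_laguerre_of_lt (by omega),
      coeff_laguerre_of_lt h]
    ring

lemma iteratedDeriv_eval (q : ℝ[X]) (k : ℕ) (z : ℝ) :
    iteratedDeriv k (fun y => q.eval y) z = (derivative^[k] q).eval z := by
  induction k generalizing z with
  | zero => simp
  | succ k ih =>
    rw [iteratedDeriv_succ, funext ih, Polynomial.deriv, Function.iterate_succ_apply']

lemma genLag_eq_eval_derivHankelDet {m : ℤ} {n N : ℕ} (h : m + n = N) (μ z : ℝ) :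
    genLag m n μ z = (derivHankelDet (laguerre N (μ + 1)) n).eval z := by
  rw [derivHankelDet, ← coe_evalRingHom, map_hankelDet]
  simp only [genLag, h, ← funext (eval_laguerre N (μ + 1)), iteratedDeriv_eval]
  rfl

end Laguerre

section Painleve

open scoped Differential

/-- The relation imposed by `P_V` on the values `w`, `w₁`, `w₂` of a function and its first two
derivatives at the point `z`, over any field. Division by zero gives zero, so it means `P_V` only
when `z ≠ 0` and `w ∉ {0, 1}`. -/
def PVRelation {K : Type*} [Field K] (α β γ z w w₁ w₂ : K) : Prop :=
  w₂ = (1 / (2 * w) + 1 / (w - 1)) * w₁ ^ 2 - (1 / z) * w₁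
      + (w - 1) ^ 2 * (α * w ^ 2 + β) / (z ^ 2 * w)
      + γ * w / z
      - w * (w + 1) / (2 * (w - 1))

/-- A state of the Hamiltonian form of `P_V` over a differential field: the independent variable
`z`, the parameters `m`, `c`, `n` (so that `α = m² / 2`, `β = -c² / 2`, `γ = c - m - 2 n - 1`), the
solution `w` and its momentum `p`. -/
@[ext]
structure PVState (K : Type*) where
  z : K
  m : K
  c : K
  n : K
  w : K
  p : K

namespace PVState

variable {K : Type*} [Field K]

/-- The second momentum `s`. With `p` it plays the part of the `e` and `q` variables of the
quotient-difference algorithm: `next` replaces `p` by `f / s`, where `f` is `nextCoupling`. -/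
def partner (S : PVState K) : K := (S.p + S.c) / S.w - S.m

/-- The Toda velocity `x = p - s` of a state. -/
def velocity (S : PVState K) : K := S.p - S.partner

/-- The Toda coupling `f` to the preceding state, characterised by `p′ = p + f - p s`. -/
def coupling (S : PVState K) : K :=
  S.p * (S.p + S.c - S.m - 1) - S.z * S.w * (S.p + S.n) / (S.w - 1)

/-- The Toda coupling to the following state, characterised by `s′ = s + f - p s`; it is the
`coupling` of `next`. -/
def nextCoupling (S : PVState K) : K :=
  S.partner * (S.partner - (S.c - S.m + 1)) -
    S.z * (S.partner - (S.c - S.m - S.n)) / (S.w - 1)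

/-- The symmetry `w ↦ 1 / w`, `z ↦ -z` of `P_V`, which exchanges `α` and `-β`. -/
def dual (S : PVState K) : PVState K where
  z := -S.z
  m := -S.c
  c := -S.m
  n := S.n
  w := S.w⁻¹
  p := S.p / S.w

/-- The Bäcklund transformation `(m, c, n) ↦ (m - 1, c + 1, n + 1)`, written so that it moves a
state and its dual one step along their Toda chains. -/
def next (S : PVState K) : PVState K where
  z := S.z
  m := S.m - 1
  c := S.c + 1
  n := S.n + 1
  w := S.w * S.nextCoupling / S.dual.nextCoupling
  p := S.nextCoupling / S.partner

/-- `S` solves the Hamiltonian system of `P_V`, with `w` avoiding the singular values `0` and `1`.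
The derivation `′` stands for the Euler derivation `z d/dz`, hence `z′ = z`. -/
structure IsSolution [Differential K] (S : PVState K) : Prop where
  deriv_z : S.z′ = S.z
  deriv_m : S.m′ = 0
  deriv_c : S.c′ = 0
  deriv_n : S.n′ = 0
  w_ne_zero : S.w ≠ 0
  w_ne_one : S.w ≠ 1
  deriv_w : S.w′ = (S.w - 1) * (2 * S.p - S.m * S.w + S.c) - S.z * S.w
  deriv_p : S.p′ = (S.w - 1) * S.p * (S.p + S.c) / S.w - S.z * S.w * (S.p + S.n) / (S.w - 1)

variable {S : PVState K}

lemma dual_partner (hw : S.w ≠ 0) : S.dual.partner = S.w * S.partner := by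
  simp only [partner, dual]; field_simp; ring

lemma dual_dual (hw : S.w ≠ 0) : S.dual.dual = S := by
  ext <;> simp [dual, hw]

variable [Differential K]

namespace IsSolution

lemma w_sub_one_ne_zero (hS : S.IsSolution) : S.w - 1 ≠ 0 := sub_ne_zero.mpr hS.w_ne_one

lemma p_eq (hS : S.IsSolution) : S.p = S.w * (S.partner + S.m) - S.c := by
  have := hS.w_ne_zero
  simp only [partner]; field_simp; ring

lemma dual (hS : S.IsSolution) : S.dual.IsSolution where
  deriv_z := by simp [PVState.dual, hS.deriv_z]
  deriv_m := by simp [PVState.dual, hS.deriv_c]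
  deriv_c := by simp [PVState.dual, hS.deriv_m]
  deriv_n := hS.deriv_n
  w_ne_zero := inv_ne_zero hS.w_ne_zero
  w_ne_one := inv_ne_one.mpr hS.w_ne_one
  deriv_w := by
    have hw := hS.w_ne_zero
    simp only [PVState.dual, Derivation.leibniz_inv, hS.deriv_w, smul_eq_mul]
    field_simp
    ring
  deriv_p := by
    have hw := hS.w_ne_zero
    have hw1 := hS.w_sub_one_ne_zero
    have hw2 : 1 - S.w ≠ 0 := by rwa [← neg_ne_zero, neg_sub]
    simp only [PVState.dual, Derivation.leibniz_div, hS.deriv_w, hS.deriv_p, smul_eq_mul]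
    field_simp
    ring

lemma deriv_p_eq (hS : S.IsSolution) : S.p′ = S.p + S.coupling - S.p * S.partner := by
  have hw := hS.w_ne_zero
  have hw1 := hS.w_sub_one_ne_zero
  rw [hS.deriv_p, coupling, partner]
  field_simp
  ring

lemma deriv_partner (hS : S.IsSolution) :
    S.partner′ = S.partner + S.nextCoupling - S.p * S.partner := by
  have hw := hS.w_ne_zero
  have hw1 := hS.w_sub_one_ne_zero
  simp only [nextCoupling, partner, map_sub, map_add, Derivation.leibniz_div, smul_eq_mul,
    hS.deriv_w, hS.deriv_p, hS.deriv_c, hS.deriv_m]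
  field_simp
  ring

lemma deriv_velocity (hS : S.IsSolution) :
    S.velocity′ = S.velocity + S.coupling - S.nextCoupling := by
  rw [velocity, map_sub, hS.deriv_p_eq, hS.deriv_partner]
  ring

lemma partner_ne_zero (hS : S.IsSolution) (h : S.nextCoupling ≠ 0) : S.partner ≠ 0 := by
  intro h0
  have := hS.deriv_partner
  simp only [h0, map_zero, zero_add, mul_zero, sub_zero] at this
  exact h this.symm

lemma deriv_partner_eq_mul (hS : S.IsSolution) (h : S.nextCoupling ≠ 0) :
    S.partner′ = S.partner * (1 + S.next.p - S.p) := by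
  have hs := hS.partner_ne_zero h
  rw [hS.deriv_partner, PVState.next]
  field_simp

lemma next_p_ne_zero (hS : S.IsSolution) (h : S.nextCoupling ≠ 0) : S.next.p ≠ 0 :=
  div_ne_zero h (hS.partner_ne_zero h)

lemma next_p_sub_dual_next_p (hS : S.IsSolution) (h : S.nextCoupling ≠ 0) :
    S.next.p - S.dual.next.p = S.z + S.partner - S.w * S.partner := by
  have hs := hS.partner_ne_zero h
  have hw := hS.w_ne_zero
  have hw1 := hS.w_sub_one_ne_zero
  have hw2 : 1 - S.w ≠ 0 := by rwa [← neg_ne_zero, neg_sub]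
  simp only [PVState.next, nextCoupling, dual_partner hw]
  simp only [PVState.dual]
  field_simp
  ring

lemma next_w_eq (hS : S.IsSolution) (h : S.nextCoupling ≠ 0) :
    S.next.w = S.next.p / S.dual.next.p := by
  have hs := hS.partner_ne_zero h
  have hw := hS.w_ne_zero
  simp only [PVState.next, dual_partner hw]
  field_simp

lemma next_dual (hS : S.IsSolution) (h : S.nextCoupling ≠ 0) :
    S.next.dual = S.dual.next := by
  have hs := hS.partner_ne_zero h
  have hw := hS.w_ne_zero
  ext
  · rfl
  · simp only [PVState.next, PVState.dual]; ring
  · simp only [PVState.next, PVState.dual]; ring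
  · rfl
  · simp only [PVState.next, dual_dual hw]
    simp only [PVState.dual]
    field_simp
  · simp only [PVState.next, dual_partner hw]
    simp only [PVState.dual]
    field_simp

lemma next_w_ne_one (hS : S.IsSolution) (h : S.nextCoupling ≠ 0)
    (h' : S.dual.nextCoupling ≠ 0) : S.next.w ≠ 1 := by
  intro hw1
  have hs := hS.partner_ne_zero h
  have hp := hS.next_p_ne_zero h
  have hq := hS.dual.next_p_ne_zero h'
  have hz : S.z = S.partner * (S.w - 1) := by
    rw [hS.next_w_eq h, div_eq_one_iff_eq hq] at hw1
    have := hS.next_p_sub_dual_next_p h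
    rw [hw1, sub_self] at this
    linear_combination -this
  have hz' := congrArg Differential.deriv hz
  simp only [Derivation.leibniz, map_sub, Derivation.map_one_eq_zero, smul_eq_mul, hS.deriv_z,
    hS.deriv_w, hS.deriv_partner_eq_mul h, sub_zero] at hz'
  have h0 : S.partner * (S.w - 1) * S.next.p = 0 := by
    linear_combination (1 + S.partner * S.w) * hz - hz' -
      S.partner * (S.w - 1) * hS.p_eq
  exact mul_ne_zero (mul_ne_zero hs hS.w_sub_one_ne_zero) hp h0

lemma next_p_mul_partner (hS : S.IsSolution) (h : S.nextCoupling ≠ 0) :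
    S.next.p * S.partner = S.nextCoupling :=
  div_mul_cancel₀ _ (hS.partner_ne_zero h)

lemma next_coupling (hS : S.IsSolution) (h : S.nextCoupling ≠ 0)
    (h' : S.dual.nextCoupling ≠ 0) : S.next.coupling = S.nextCoupling := by
  have hs := hS.partner_ne_zero h
  have hw := hS.w_sub_one_ne_zero
  have hq := hS.dual.next_p_ne_zero h'
  have hpq : S.next.p - S.dual.next.p ≠ 0 := by
    have := hS.next_w_ne_one h h'
    rwa [hS.next_w_eq h, Ne, div_eq_one_iff_eq hq, ← sub_eq_zero] at this
  have hps := hS.next_p_mul_partner h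
  have key : (S.next.p + S.c - S.m + 1 - S.partner) * (S.next.p - S.dual.next.p) =
      S.z * (S.next.p + (S.n + 1)) := by
    have hG : S.next.p * S.partner * (S.w - 1) =
        S.partner * (S.partner - (S.c - S.m + 1)) * (S.w - 1) -
          S.z * (S.partner - (S.c - S.m - S.n)) := by
      rw [hps, nextCoupling]; field_simp
    rw [hS.next_p_sub_dual_next_p h]
    refine mul_left_cancel₀ (mul_ne_zero hs hw) ?_
    linear_combination (S.partner - S.w * S.partner) * hG
  have hfrac : S.next.w / (S.next.w - 1) = S.next.p / (S.next.p - S.dual.next.p) := by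
    rw [hS.next_w_eq h, div_sub_one hq, div_div_div_cancel_right₀ hq]
  calc S.next.coupling
      = S.next.p * (S.next.p + S.c - S.m + 1) -
          S.z * (S.next.p + (S.n + 1)) * (S.next.w / (S.next.w - 1)) := by
        simp only [coupling, PVState.next]; ring
    _ = S.next.p * S.partner := by
        rw [hfrac, ← key]; field_simp; ring
    _ = S.nextCoupling := hps

lemma next_p_mul_next_partner (hS : S.IsSolution) (h : S.nextCoupling ≠ 0) :
    S.next.p * S.next.partner =
      S.dual.next.p * (S.next.p + S.c + 1) - (S.m - 1) * S.next.p := by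
  have hp := hS.next_p_ne_zero h
  have : S.next.partner = (S.next.p + (S.c + 1)) / S.next.w - (S.m - 1) := rfl
  rw [this, hS.next_w_eq h]
  field_simp
  ring

lemma deriv_next_p (hS : S.IsSolution) (h : S.nextCoupling ≠ 0) :
    S.next.p′ = S.next.p * (1 + S.partner - S.next.partner) := by
  have hs := hS.partner_ne_zero h
  have hw1 := hS.w_sub_one_ne_zero
  have hr : S.next.p * (1 + S.partner - S.next.partner) =
      S.next.p * (S.partner + S.m) -
        (S.next.p - (S.z + S.partner - S.w * S.partner)) * (S.next.p + S.c + 1) := by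
    linear_combination -hS.next_p_mul_next_partner h +
      (S.next.p + S.c + 1) * hS.next_p_sub_dual_next_p h
  have hp : S.next.p = S.partner - (S.c - S.m + 1) -
      S.z * (S.partner - (S.c - S.m - S.n)) / (S.partner * (S.w - 1)) := by
    simp only [PVState.next, nextCoupling]; field_simp
  have hp' := congrArg Differential.deriv hp
  simp only [Derivation.leibniz, Derivation.leibniz_div, map_sub, map_add,
    Derivation.map_one_eq_zero, smul_eq_mul, hS.deriv_z, hS.deriv_m, hS.deriv_c, hS.deriv_n,
    hS.deriv_w, hS.deriv_partner_eq_mul h] at hp'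
  rw [hr, hp', hp, hS.p_eq]
  field_simp
  ring

lemma next_w_ne_zero (hS : S.IsSolution) (h : S.nextCoupling ≠ 0)
    (h' : S.dual.nextCoupling ≠ 0) : S.next.w ≠ 0 :=
  div_ne_zero (mul_ne_zero hS.w_ne_zero h) h'

lemma deriv_dual_next_p (hS : S.IsSolution) (h : S.nextCoupling ≠ 0)
    (h' : S.dual.nextCoupling ≠ 0) :
    S.dual.next.p′ =
      S.dual.next.p * (1 + S.w * S.partner - S.next.w * S.next.partner) := by
  rw [hS.dual.deriv_next_p h', ← hS.next_dual h, dual_partner hS.w_ne_zero,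
    dual_partner (hS.next_w_ne_zero h h')]

lemma deriv_next_w (hS : S.IsSolution) (h : S.nextCoupling ≠ 0)
    (h' : S.dual.nextCoupling ≠ 0) :
    S.next.w′ = (S.next.w - 1) * (2 * S.next.p - S.next.m * S.next.w + S.next.c) -
      S.next.z * S.next.w := by
  have hq := hS.dual.next_p_ne_zero h'
  have hw := hS.next_w_ne_zero h h'
  have hwq : S.next.w * S.dual.next.p = S.next.p := by
    rw [hS.next_w_eq h, div_mul_cancel₀ _ hq]
  have hpartner : S.next.w * S.next.partner = S.next.p + S.next.c - S.next.m * S.next.w := by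
    rw [partner]; field_simp
  have hwq' := congrArg Differential.deriv hwq
  rw [Derivation.leibniz, hS.deriv_dual_next_p h h', hS.deriv_next_p h, smul_eq_mul,
    smul_eq_mul] at hwq'
  refine mul_left_cancel₀ hq ?_
  have hsub := hS.next_p_sub_dual_next_p h
  have hz : S.next.z = S.z := rfl
  rw [hz]
  linear_combination hwq' + S.dual.next.p * (S.next.w - 1) * hpartner - S.next.p * hsub +
    (S.z - 1 - S.w * S.partner + S.next.partner - S.next.p) * hwq

lemma next (hS : S.IsSolution) (h : S.nextCoupling ≠ 0) (h' : S.dual.nextCoupling ≠ 0) :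
    S.next.IsSolution where
  deriv_z := hS.deriv_z
  deriv_m := by simp [PVState.next, hS.deriv_m]
  deriv_c := by simp [PVState.next, hS.deriv_c]
  deriv_n := by simp [PVState.next, hS.deriv_n]
  w_ne_zero := hS.next_w_ne_zero h h'
  w_ne_one := hS.next_w_ne_one h h'
  deriv_w := hS.deriv_next_w h h'
  deriv_p := by
    have hw := hS.next_w_ne_zero h h'
    have hw1 := sub_ne_zero.mpr (hS.next_w_ne_one h h')
    have hderiv : S.next.p′ =
        S.next.p + S.next.coupling - S.next.p * S.next.partner := by
      rw [hS.deriv_next_p h, hS.next_coupling h h', ← hS.next_p_mul_partner h]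
      ring
    rw [hderiv, coupling, partner]
    field_simp
    ring

lemma deriv_nextCoupling (hS : S.IsSolution) (h : S.nextCoupling ≠ 0) :
    S.nextCoupling′ = S.nextCoupling * (2 + S.next.velocity - S.velocity) := by
  have hps := hS.next_p_mul_partner h
  rw [← hps, Derivation.leibniz, hS.deriv_next_p h, hS.deriv_partner_eq_mul h]
  simp only [velocity, smul_eq_mul]
  ring

lemma pvRelation [NeZero (2 : K)] (hS : S.IsSolution) (hz : S.z ≠ 0) :
    PVRelation (S.m ^ 2 / 2) (-S.c ^ 2 / 2) (S.c - S.m - 2 * S.n - 1) S.z S.w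
      (S.w′ / S.z) ((S.w′′ - S.w′) / S.z ^ 2) := by
  have hw := hS.w_ne_zero
  have hw1 := hS.w_sub_one_ne_zero
  have hw2 : S.w′′ = S.w′ * (2 * S.p - S.m * S.w + S.c) +
      (S.w - 1) * (2 * S.p′ - S.m * S.w′) - (S.z * S.w′ + S.z * S.w) := by
    conv_lhs => rw [hS.deriv_w, two_mul]
    simp only [Derivation.leibniz, map_sub, map_add, Derivation.map_one_eq_zero, smul_eq_mul,
      hS.deriv_z, hS.deriv_m, hS.deriv_c]
    ring
  rw [PVRelation, hw2, hS.deriv_p, hS.deriv_w]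
  field_simp
  ring

end IsSolution

end PVState

end Painleve

section TodaFlow

open scoped Differential

variable {K : Type*} [Field K]

/-- The first `N` equations of the Toda chain for the velocities `x n` and couplings `f n`, in the
Euler derivation: the linear terms `x n` and `2 f` come from `z d/dz` in place of `d/dz`. -/
structure IsTodaFlow [Differential K] (N : ℕ) (x f : ℕ → K) : Prop where
  deriv_velocity : ∀ n < N, (x n)′ = x n + f n - f (n + 1)
  deriv_coupling : ∀ n < N, (f (n + 1))′ = f (n + 1) * (2 + x (n + 1) - x n)
  coupling_ne_zero : ∀ n < N, f (n + 1) ≠ 0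

namespace PVState

lemma iterate_next_params (S : PVState K) (n : ℕ) :
    (PVState.next^[n] S).z = S.z ∧ (PVState.next^[n] S).m = S.m - n ∧
      (PVState.next^[n] S).c = S.c + n ∧ (PVState.next^[n] S).n = S.n + n := by
  induction n with
  | zero => simp
  | succ n ih =>
    obtain ⟨hz, hm, hc, hn⟩ := ih
    rw [Function.iterate_succ_apply']
    refine ⟨hz, ?_, ?_, ?_⟩
    · simp only [PVState.next, hm]; push_cast; ring
    · simp only [PVState.next, hc]; push_cast; ring
    · simp only [PVState.next, hn]; push_cast; ring

/-- The Toda variables of the state `S` are those at site `n` of the chain `(x, f)`. -/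
structure Tracks (S : PVState K) (x f : ℕ → K) (n : ℕ) : Prop where
  velocity_eq : S.velocity = x n
  coupling_eq : S.coupling = f n

variable [Differential K] {S : PVState K} {N n : ℕ} {x φ y ψ : ℕ → K}

lemma Tracks.nextCoupling_eq (h : S.Tracks x φ n) (hS : S.IsSolution) (hflow : IsTodaFlow N x φ)
    (hn : n < N) : S.nextCoupling = φ (n + 1) := by
  have hderiv := hS.deriv_velocity
  rw [h.velocity_eq, h.coupling_eq, hflow.deriv_velocity n hn] at hderiv
  linear_combination hderiv

lemma Tracks.next (h : S.Tracks x φ n) (hS : S.IsSolution) (hflow : IsTodaFlow N x φ)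
    (hn : n < N) (h' : S.dual.nextCoupling ≠ 0) : S.next.Tracks x φ (n + 1) := by
  have hf := h.nextCoupling_eq hS hflow hn
  have hf0 := hflow.coupling_ne_zero n hn
  have hne : S.nextCoupling ≠ 0 := hf ▸ hf0
  refine ⟨?_, (hS.next_coupling hne h').trans hf⟩
  have hderiv := hS.deriv_nextCoupling hne
  rw [hf, hflow.deriv_coupling n hn, h.velocity_eq] at hderiv
  linear_combination -(mul_left_cancel₀ hf0 hderiv)

lemma isSolution_and_tracks_iterate_next (hS : S.IsSolution) (hx : S.Tracks x φ 0)
    (hy : S.dual.Tracks y ψ 0) (hflow : IsTodaFlow N x φ) (hflow' : IsTodaFlow N y ψ) (hn : n ≤ N) :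
    (PVState.next^[n] S).IsSolution ∧ (PVState.next^[n] S).Tracks x φ n ∧
      (PVState.next^[n] S).dual.Tracks y ψ n := by
  induction n with
  | zero => exact ⟨hS, hx, hy⟩
  | succ n ih =>
    obtain ⟨hT, htrack, hdual⟩ := ih (Nat.le_of_succ_le hn)
    rw [Function.iterate_succ_apply']
    set T := PVState.next^[n] S
    have hne : T.nextCoupling ≠ 0 :=
      (htrack.nextCoupling_eq hT hflow hn).trans_ne (hflow.coupling_ne_zero n hn)
    have hne' : T.dual.nextCoupling ≠ 0 :=
      (hdual.nextCoupling_eq hT.dual hflow' hn).trans_ne (hflow'.coupling_ne_zero n hn)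
    refine ⟨hT.next hne hne', htrack.next hT hflow hn hne', ?_⟩
    rw [hT.next_dual hne]
    exact hdual.next hT.dual hflow' hn (by rwa [dual_dual hT.w_ne_zero])

/-- The state at the start of the chain, where `n = p = 0` and `w = f / g` is a Riccati solution. -/
def seed (z m c f g : K) : PVState K := ⟨z, m, c, 0, f / g, 0⟩

/-- The first-order linear system for `(f, g)` that linearises the Riccati equation of `seed`; two
neighbouring Laguerre polynomials satisfy it. -/
structure IsSeed (z m c f g : K) : Prop where
  deriv_z : z′ = z
  deriv_m : m′ = 0
  deriv_c : c′ = 0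
  left_ne_zero : f ≠ 0
  right_ne_zero : g ≠ 0
  left_ne_right : f ≠ g
  deriv_left : f′ = m * f - c * g
  deriv_right : g′ = m * f - c * g + z * g

lemma IsSeed.isSolution {z m c f g : K} (h : IsSeed z m c f g) : (seed z m c f g).IsSolution where
  deriv_z := h.deriv_z
  deriv_m := h.deriv_m
  deriv_c := h.deriv_c
  deriv_n := map_zero _
  w_ne_zero := div_ne_zero h.left_ne_zero h.right_ne_zero
  w_ne_one := div_ne_one_of_ne h.left_ne_right
  deriv_w := by
    have hg := h.right_ne_zero
    simp only [seed, Derivation.leibniz_div, smul_eq_mul, h.deriv_left, h.deriv_right]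
    field_simp
    ring
  deriv_p := by simp [seed]

lemma tracks_seed {z m c f g : K} (h : IsSeed z m c f g) (hx : x 0 = Differential.logDeriv f)
    (hf : φ 0 = 0) : (seed z m c f g).Tracks x φ 0 where
  velocity_eq := by
    have h₁ := h.left_ne_zero
    simp only [velocity, partner, seed, hx, Differential.logDeriv, h.deriv_left]
    field_simp
    ring
  coupling_eq := by simp [coupling, seed, hf]

lemma tracks_dual_seed {z m c f g : K} (h : IsSeed z m c f g)
    (hx : x 0 = Differential.logDeriv g - z) (hf : φ 0 = 0) :
    (seed z m c f g).dual.Tracks x φ 0 where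
  velocity_eq := by
    have h₁ := h.left_ne_zero
    have h₂ := h.right_ne_zero
    simp only [velocity, partner, dual, seed, hx, Differential.logDeriv, h.deriv_right]
    field_simp
    ring
  coupling_eq := by simp [coupling, dual, seed, hf]

end PVState

/-- The Toda velocities of a sequence of tau functions `A n`. -/
def todaVelocity [Differential K] (A : ℕ → K) (n : ℕ) : K :=
  Differential.logDeriv (A (n + 1)) - Differential.logDeriv (A n)

/-- The Toda couplings of a sequence of tau functions `A n`. -/
def todaCoupling [Differential K] (A : ℕ → K) (n : ℕ) : K :=
  Differential.logDeriv (A n) - (Differential.logDeriv (A n))′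

lemma deriv_todaVelocity [Differential K] (A : ℕ → K) (n : ℕ) :
    (todaVelocity A n)′ = todaVelocity A n + todaCoupling A n - todaCoupling A (n + 1) := by
  rw [todaVelocity, map_sub, todaCoupling, todaCoupling]
  ring

/-- `A` is a sequence of tau functions of the Toda chain, nonzero up to index `N + 1`. The
right-hand side of `toda` is `z²` times the usual `A A'' - A'²`, since
`z² d²/dz² = (z d/dz)² - z d/dz`. -/
structure IsTodaSequence [Differential K] (z : K) (N : ℕ) (A : ℕ → K) : Prop where
  zero_eq_one : A 0 = 1
  ne_zero : ∀ n ≤ N + 1, A n ≠ 0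
  toda : ∀ n < N, z ^ 2 * (A (n + 2) * A n) =
    A (n + 1) * ((A (n + 1))′′ - (A (n + 1))′) - (A (n + 1))′ ^ 2

namespace IsTodaSequence

variable [Differential K] {z : K} {N n : ℕ} {A : ℕ → K}

lemma todaCoupling_zero (hA : IsTodaSequence z N A) : todaCoupling A 0 = 0 := by
  simp [todaCoupling, hA.zero_eq_one]

lemma todaVelocity_zero (hA : IsTodaSequence z N A) :
    todaVelocity A 0 = Differential.logDeriv (A 1) := by
  simp [todaVelocity, hA.zero_eq_one]

lemma todaCoupling_succ (hA : IsTodaSequence z N A) (hn : n < N) :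
    todaCoupling A (n + 1) = -(z ^ 2 * (A (n + 2) * A n) / A (n + 1) ^ 2) := by
  have h := hA.ne_zero (n + 1) (by omega)
  rw [hA.toda n hn, todaCoupling, Differential.logDeriv, Derivation.leibniz_div, smul_eq_mul,
    smul_eq_mul]
  field_simp
  ring

lemma todaCoupling_succ_ne_zero (hA : IsTodaSequence z N A) (hz : z ≠ 0) (hn : n < N) :
    todaCoupling A (n + 1) ≠ 0 := by
  rw [hA.todaCoupling_succ hn]
  exact neg_ne_zero.mpr <| div_ne_zero
    (mul_ne_zero (pow_ne_zero 2 hz)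
      (mul_ne_zero (hA.ne_zero _ (by omega)) (hA.ne_zero _ (by omega))))
    (pow_ne_zero 2 (hA.ne_zero _ (by omega)))

lemma deriv_todaCoupling_succ (hA : IsTodaSequence z N A) (hz : z ≠ 0) (hz' : z′ = z)
    (hn : n < N) : (todaCoupling A (n + 1))′ =
      todaCoupling A (n + 1) * (2 + todaVelocity A (n + 1) - todaVelocity A n) := by
  have h₀ := hA.ne_zero n (by omega)
  have h₁ := hA.ne_zero (n + 1) (by omega)
  have h₂ := hA.ne_zero (n + 2) (by omega)
  simp only [hA.todaCoupling_succ hn, todaVelocity, Differential.logDeriv, map_neg,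
    Derivation.leibniz_div, Derivation.leibniz, Derivation.leibniz_pow, smul_eq_mul, nsmul_eq_mul,
    hz']
  field_simp
  push_cast
  ring

lemma isTodaFlow (hA : IsTodaSequence z N A) (hz : z ≠ 0) (hz' : z′ = z) :
    IsTodaFlow N (todaVelocity A) (todaCoupling A) where
  deriv_velocity n _ := deriv_todaVelocity A n
  deriv_coupling _ hn := hA.deriv_todaCoupling_succ hz hz' hn
  coupling_ne_zero _ hn := hA.todaCoupling_succ_ne_zero hz hn

end IsTodaSequence

lemma IsTodaFlow.sub_const [Differential K] {N : ℕ} {x f : ℕ → K} {z : K}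
    (h : IsTodaFlow N x f) (hz' : z′ = z) : IsTodaFlow N (fun n => x n - z) f where
  deriv_velocity n hn := by rw [map_sub, h.deriv_velocity n hn, hz']; ring
  deriv_coupling n hn := by rw [h.deriv_coupling n hn]; ring
  coupling_ne_zero := h.coupling_ne_zero

/-- The quotient `A (n + 1) B n / (A n B (n + 1))` of two sequences of tau functions. -/
def todaQuotient (A B : ℕ → K) (n : ℕ) : K := A (n + 1) * B n / (A n * B (n + 1))

namespace PVState.IsSeed

variable [Differential K] {z m c : K} {N n : ℕ} {A B : ℕ → K}

lemma isSolution_and_tracks_iterate_next_seed (h : IsSeed z m c (A 1) (B 1)) (hz : z ≠ 0)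
    (hA : IsTodaSequence z N A) (hB : IsTodaSequence z N B) (hn : n ≤ N) :
    (PVState.next^[n] (seed z m c (A 1) (B 1))).IsSolution ∧
      (PVState.next^[n] (seed z m c (A 1) (B 1))).Tracks (todaVelocity A) (todaCoupling A) n ∧
      (PVState.next^[n] (seed z m c (A 1) (B 1))).dual.Tracks
        (fun n => todaVelocity B n - z) (todaCoupling B) n :=
  isSolution_and_tracks_iterate_next h.isSolution
    (tracks_seed h hA.todaVelocity_zero hA.todaCoupling_zero)
    (tracks_dual_seed h (by rw [hB.todaVelocity_zero]) hB.todaCoupling_zero)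
    (hA.isTodaFlow hz h.deriv_z) ((hB.isTodaFlow hz h.deriv_z).sub_const h.deriv_z) hn

lemma iterate_next_w (h : IsSeed z m c (A 1) (B 1)) (hz : z ≠ 0)
    (hA : IsTodaSequence z N A) (hB : IsTodaSequence z N B) (hn : n ≤ N) :
    (PVState.next^[n] (seed z m c (A 1) (B 1))).w = todaQuotient A B n := by
  induction n with
  | zero => simp [todaQuotient, seed, hA.zero_eq_one, hB.zero_eq_one]
  | succ n ih =>
    specialize ih (Nat.le_of_succ_le hn)
    obtain ⟨hT, htrack, hdual⟩ :=
      h.isSolution_and_tracks_iterate_next_seed hz hA hB (Nat.le_of_succ_le hn)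
    rw [Function.iterate_succ_apply']
    simp only [PVState.next]
    rw [ih, htrack.nextCoupling_eq hT (hA.isTodaFlow hz h.deriv_z) hn,
      hdual.nextCoupling_eq hT.dual ((hB.isTodaFlow hz h.deriv_z).sub_const h.deriv_z) hn,
      hA.todaCoupling_succ hn, hB.todaCoupling_succ hn]
    have hA₀ := hA.ne_zero n (by omega)
    have hA₁ := hA.ne_zero (n + 1) (by omega)
    have hA₂ := hA.ne_zero (n + 2) (by omega)
    have hB₀ := hB.ne_zero n (by omega)
    have hB₁ := hB.ne_zero (n + 1) (by omega)
    have hB₂ := hB.ne_zero (n + 2) (by omega)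
    rw [todaQuotient, todaQuotient]
    field_simp

lemma todaQuotient_ne_one (h : IsSeed z m c (A 1) (B 1)) (hz : z ≠ 0)
    (hA : IsTodaSequence z N A) (hB : IsTodaSequence z N B) (hn : n ≤ N) :
    todaQuotient A B n ≠ 1 := by
  rw [← h.iterate_next_w hz hA hB hn]
  exact (h.isSolution_and_tracks_iterate_next_seed hz hA hB hn).1.w_ne_one

theorem pvRelation_todaQuotient [NeZero (2 : K)] (h : IsSeed z m c (A 1) (B 1)) (hz : z ≠ 0)
    (hA : IsTodaSequence z N A) (hB : IsTodaSequence z N B) (hn : n ≤ N) :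
    PVRelation ((m - n) ^ 2 / 2) (-(c + n) ^ 2 / 2) (c - m - 1) z (todaQuotient A B n)
      ((todaQuotient A B n)′ / z) (((todaQuotient A B n)′′ - (todaQuotient A B n)′) / z ^ 2) := by
  have hS := (h.isSolution_and_tracks_iterate_next_seed hz hA hB hn).1
  obtain ⟨hSz, hSm, hSc, hSn⟩ := iterate_next_params (seed z m c (A 1) (B 1)) n
  have hrel := hS.pvRelation (by rwa [hSz])
  rw [hSz, hSm, hSc, hSn, h.iterate_next_w hz hA hB hn] at hrel
  simp only [seed] at hrel
  convert hrel using 1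
  ring

end PVState.IsSeed

end TodaFlow

section ClearedEquation

/-- The relation `P_V` for `w = P / Q` with denominators cleared, where `P₁, Q₁, P₂, Q₂` stand for
the derivatives of `P` and `Q`. Being polynomial, it passes through ring homomorphisms. -/
def pvNumerator {R : Type*} [CommRing R] (α β γ z P Q P₁ Q₁ P₂ Q₂ : R) : R :=
  2 * z ^ 2 * P * (P - Q) * ((P₂ * Q - P * Q₂) * Q - 2 * (P₁ * Q - P * Q₁) * Q₁)
    - (z ^ 2 * (3 * P - Q) * (P₁ * Q - P * Q₁) ^ 2
      - 2 * z * P * (P - Q) * (P₁ * Q - P * Q₁) * Q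
      + 2 * (P - Q) ^ 3 * (α * P ^ 2 + β * Q ^ 2)
      + 2 * γ * z * P ^ 2 * (P - Q) * Q ^ 2 - z ^ 2 * P ^ 2 * (P + Q) * Q ^ 2)

lemma map_pvNumerator {R S : Type*} [CommRing R] [CommRing S] (f : R →+* S)
    (α β γ z P Q P₁ Q₁ P₂ Q₂ : R) :
    f (pvNumerator α β γ z P Q P₁ Q₁ P₂ Q₂) =
      pvNumerator (f α) (f β) (f γ) (f z) (f P) (f Q) (f P₁) (f Q₁) (f P₂) (f Q₂) := by
  simp only [pvNumerator, map_sub, map_add, map_mul, map_pow, map_ofNat]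

variable {K : Type*} [Field K]

lemma pvRelation_div_iff [NeZero (2 : K)] {z P Q : K} (hz : z ≠ 0) (hP : P ≠ 0) (hQ : Q ≠ 0)
    (hPQ : P ≠ Q) (α β γ P₁ Q₁ P₂ Q₂ : K) :
    PVRelation α β γ z (P / Q) ((P₁ * Q - P * Q₁) / Q ^ 2)
      (((P₂ * Q - P * Q₂) * Q - 2 * (P₁ * Q - P * Q₁) * Q₁) / Q ^ 3) ↔
      pvNumerator α β γ z P Q P₁ Q₁ P₂ Q₂ = 0 := by
  obtain ⟨d, rfl⟩ : ∃ d, P = Q + d := ⟨P - Q, by ring⟩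
  have hd : d ≠ 0 := fun h => hPQ (by rw [h, add_zero])
  have hsub : (Q + d) / Q - 1 = d / Q := by field_simp; ring
  have h2 : (2 : K) ≠ 0 := two_ne_zero
  have hden : 2 * z ^ 2 * (Q + d) * d * Q ^ 3 ≠ 0 := by
    simp only [ne_eq, mul_eq_zero, pow_eq_zero_iff, OfNat.ofNat_ne_zero, not_false_eq_true,
      not_or]
    exact ⟨⟨⟨⟨h2, hz⟩, hP⟩, hd⟩, hQ⟩
  rw [PVRelation, hsub, ← sub_eq_zero, ← mul_eq_zero_iff_left hden, pvNumerator,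
    add_sub_cancel_left]
  refine Eq.congr_left ?_
  field_simp
  ring

open scoped Differential

variable [Differential K] {z P Q P₁ Q₁ : K}

lemma deriv_div_div (hz : z ≠ 0) (hQ : Q ≠ 0) (hP' : P′ = z * P₁) (hQ' : Q′ = z * Q₁) :
    (P / Q)′ / z = (P₁ * Q - P * Q₁) / Q ^ 2 := by
  rw [Derivation.leibniz_div, hP', hQ', smul_eq_mul, smul_eq_mul, smul_eq_mul]
  field_simp

lemma deriv_deriv_div_sub_div {P₂ Q₂ : K} (hz : z ≠ 0) (hz' : z′ = z) (hQ : Q ≠ 0)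
    (hP' : P′ = z * P₁) (hQ' : Q′ = z * Q₁) (hP'' : P₁′ = z * P₂) (hQ'' : Q₁′ = z * Q₂) :
    ((P / Q)′′ - (P / Q)′) / z ^ 2 =
      ((P₂ * Q - P * Q₂) * Q - 2 * (P₁ * Q - P * Q₁) * Q₁) / Q ^ 3 := by
  have hw' : (P / Q)′ = z * ((P₁ * Q - P * Q₁) / Q ^ 2) := by
    rw [← deriv_div_div hz hQ hP' hQ', mul_div_cancel₀ _ hz]
  rw [hw']
  simp only [Derivation.leibniz, Derivation.leibniz_div, Derivation.leibniz_pow, map_sub,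
    smul_eq_mul, nsmul_eq_mul, hz', hP', hQ', hP'', hQ'']
  field_simp
  push_cast
  ring

end ClearedEquation

section RationalFunction

open scoped Polynomial
open Polynomial

/-- The polynomial obtained from `P_V` for the rational function `P / Q` by clearing
denominators. -/
def pvPolynomial (α β γ : ℝ) (P Q : ℝ[X]) : ℝ[X] :=
  pvNumerator (C α) (C β) (C γ) X P Q (derivative P) (derivative Q) (derivative (derivative P))
    (derivative (derivative Q))

lemma hasDerivAt_eval_div (P Q : ℝ[X]) {z : ℝ} (hQ : Q.eval z ≠ 0) :
    HasDerivAt (fun y => P.eval y / Q.eval y)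
      (((derivative P).eval z * Q.eval z - P.eval z * (derivative Q).eval z) / Q.eval z ^ 2) z :=
  (P.hasDerivAt z).div (Q.hasDerivAt z) hQ

lemma hasDerivAt_deriv_eval_div (P Q : ℝ[X]) {z : ℝ} (hQ : Q.eval z ≠ 0) :
    HasDerivAt (deriv fun y => P.eval y / Q.eval y)
      ((((derivative (derivative P)).eval z * Q.eval z -
          P.eval z * (derivative (derivative Q)).eval z) * Q.eval z -
        2 * ((derivative P).eval z * Q.eval z - P.eval z * (derivative Q).eval z) *
          (derivative Q).eval z) / Q.eval z ^ 3) z := by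
  have hderiv : deriv (fun y => P.eval y / Q.eval y) =ᶠ[nhds z]
      fun y => (derivative P * Q - P * derivative Q).eval y / (Q ^ 2).eval y := by
    filter_upwards [Q.continuous.continuousAt.eventually_ne hQ] with y hy
    rw [(hasDerivAt_eval_div P Q hy).deriv]
    simp only [eval_sub, eval_mul, eval_pow]
  have hnum := hasDerivAt_eval_div (derivative P * Q - P * derivative Q) (Q ^ 2) (z := z)
    (by simpa using hQ)
  refine (hnum.congr_of_eventuallyEq hderiv).congr_deriv ?_
  simp only [derivative_mul, derivative_sub, derivative_pow, eval_mul, eval_sub, eval_add,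
    eval_pow, eval_C]
  field_simp
  push_cast
  ring

lemma pv_eval_div_iff (α β γ : ℝ) {P Q : ℝ[X]} {z : ℝ} (hz : z ≠ 0) (hQ : Q.eval z ≠ 0)
    (hw₀ : P.eval z / Q.eval z ≠ 0) (hw₁ : P.eval z / Q.eval z ≠ 1) :
    PV α β γ (fun y => P.eval y / Q.eval y) z ↔ (pvPolynomial α β γ P Q).eval z = 0 := by
  have hP : P.eval z ≠ 0 := fun h => hw₀ (by rw [h, zero_div])
  have hPQ : P.eval z ≠ Q.eval z := fun h => hw₁ (by rw [h, div_self hQ])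
  rw [pvPolynomial, ← coe_evalRingHom, map_pvNumerator]
  simp only [coe_evalRingHom, eval_C, eval_X]
  rw [← pvRelation_div_iff hz hP hQ hPQ, PV, iteratedDeriv_succ, iteratedDeriv_one,
    (hasDerivAt_deriv_eval_div P Q hQ).deriv, (hasDerivAt_eval_div P Q hQ).deriv]
  rfl

end RationalFunction

section EulerDerivation

open scoped TensorProduct Differential Polynomial
open KaehlerDifferential

lemma exists_derivation_extending {A R K : Type*} [CommRing A] [CommRing R] [Algebra A R]
    [CommRing K] [Algebra A K] [Algebra R K] [IsScalarTower A R K] (M : Submonoid R)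
    [IsLocalization M K] (d : Derivation A R R) :
    ∃ D : Derivation A K K, ∀ r, D (algebraMap R K r) = algebraMap R K (d r) := by
  have := Algebra.FormallyEtale.of_isLocalization (Rₘ := K) M
  let onKaehler : Ω[R⁄A] →ₗ[R] K := (Algebra.linearMap R K) ∘ₗ d.liftKaehlerDifferential
  refine ⟨((onKaehler.liftBaseChange K) ∘ₗ
    (tensorKaehlerEquivOfFormallyEtale A R K).symm.toLinearMap).compDer (D A K), fun r => ?_⟩
  simp [onKaehler, tensorKaehlerEquivOfFormallyEtale_symm_D_algebraMap]

open Polynomial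

/-- The derivation of `K`, usually the field of rational functions, extends `X d/dX` on `R[X]`. -/
def IsEulerDerivation (R K : Type*) [CommRing R] [Field K] [Algebra R[X] K] [Differential K] :
    Prop :=
  ∀ p : R[X], (algebraMap R[X] K p)′ = algebraMap R[X] K (X * derivative p)

lemma exists_isEulerDerivation (R K : Type*) [CommRing R] [Field K] [Algebra R[X] K]
    [IsFractionRing R[X] K] : ∃ _ : Differential K, IsEulerDerivation R K := by
  obtain ⟨D, hD⟩ := exists_derivation_extending (A := ℤ) (K := K) (nonZeroDivisors R[X])
    (((X : R[X]) • derivative').restrictScalars ℤ)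
  exact ⟨⟨D⟩, hD⟩

namespace IsEulerDerivation

variable {R K : Type*} [CommRing R] [Field K] [Algebra R[X] K] [Differential K]

lemma deriv_X (hD : IsEulerDerivation R K) :
    (algebraMap R[X] K X)′ = algebraMap R[X] K X := by
  rw [hD, derivative_X, mul_one]

lemma deriv_C (hD : IsEulerDerivation R K) (r : R) : (algebraMap R[X] K (C r))′ = 0 := by
  rw [hD, derivative_C, mul_zero, map_zero]

lemma deriv_algebraMap (hD : IsEulerDerivation R K) (p : R[X]) :
    (algebraMap R[X] K p)′ = algebraMap R[X] K X * algebraMap R[X] K (derivative p) := by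
  rw [hD, map_mul]

lemma isTodaSequence_derivHankelDet [IsDomain R] [CharZero R] [IsFractionRing R[X] K]
    (hD : IsEulerDerivation R K) {f : R[X]} (hf : f ≠ 0) {N : ℕ} (hN : N ≤ f.natDegree) :
    IsTodaSequence (algebraMap R[X] K X) N fun n => algebraMap R[X] K (derivHankelDet f n) where
  zero_eq_one := by rw [derivHankelDet_zero, map_one]
  ne_zero n hn := (FaithfulSMul.algebraMap_eq_zero_iff R[X] K).not.mpr
    (derivHankelDet_ne_zero_and_natDegree hf (by omega)).1
  toda n hn := by
    have htoda := toda_derivHankelDet (derivHankelDet_ne_zero_and_natDegree hf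
      (show n ≤ f.natDegree + 1 by omega)).1
    simp only [hD _, ← map_sub, ← map_mul, ← map_pow, htoda, derivative_mul, derivative_X]
    congr 1
    ring

lemma pvPolynomial_eq_zero_iff {K : Type*} [Field K] [Algebra ℝ[X] K] [IsFractionRing ℝ[X] K]
    [Differential K] (hD : IsEulerDerivation ℝ K) {α β γ : ℝ} {P Q : ℝ[X]} (hP : P ≠ 0)
    (hQ : Q ≠ 0) (hPQ : P ≠ Q) :
    pvPolynomial α β γ P Q = 0 ↔
      PVRelation (algebraMap ℝ[X] K (C α)) (algebraMap ℝ[X] K (C β)) (algebraMap ℝ[X] K (C γ))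
        (algebraMap ℝ[X] K X) (algebraMap ℝ[X] K P / algebraMap ℝ[X] K Q)
        ((algebraMap ℝ[X] K P / algebraMap ℝ[X] K Q)′ / algebraMap ℝ[X] K X)
        (((algebraMap ℝ[X] K P / algebraMap ℝ[X] K Q)′′ -
          (algebraMap ℝ[X] K P / algebraMap ℝ[X] K Q)′) / algebraMap ℝ[X] K X ^ 2) := by
  have hι := FaithfulSMul.algebraMap_injective ℝ[X] K
  have := charZero_of_injective_algebraMap hι
  have hX' := (map_ne_zero_iff _ hι).mpr (X_ne_zero (R := ℝ))
  have hP' := (map_ne_zero_iff _ hι).mpr hP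
  have hQ' := (map_ne_zero_iff _ hι).mpr hQ
  rw [deriv_div_div hX' hQ' (hD.deriv_algebraMap P) (hD.deriv_algebraMap Q),
    deriv_deriv_div_sub_div hX' hD.deriv_X hQ' (hD.deriv_algebraMap P) (hD.deriv_algebraMap Q)
      (hD.deriv_algebraMap _) (hD.deriv_algebraMap _),
    pvRelation_div_iff hX' hP' hQ' (hι.ne hPQ), ← map_eq_zero_iff _ hι, pvPolynomial,
    map_pvNumerator]

end IsEulerDerivation

end EulerDerivation

section LaguerreSolution

open scoped Polynomial
open Polynomial

lemma isSeed_laguerre {K : Type*} [Field K] [Algebra ℝ[X] K] [IsFractionRing ℝ[X] K]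
    [Differential K] (hD : IsEulerDerivation ℝ K) (N : ℕ) (a : ℝ) :
    PVState.IsSeed (algebraMap ℝ[X] K X) (algebraMap ℝ[X] K (C (N + 1 : ℝ)))
      (algebraMap ℝ[X] K (C (N + 1 + a))) (algebraMap ℝ[X] K (laguerre (N + 1) a))
      (algebraMap ℝ[X] K (laguerre N a)) where
  deriv_z := hD.deriv_X
  deriv_m := hD.deriv_C _
  deriv_c := hD.deriv_C _
  left_ne_zero := (FaithfulSMul.algebraMap_eq_zero_iff _ K).not.mpr (laguerre_ne_zero _ a)
  right_ne_zero := (FaithfulSMul.algebraMap_eq_zero_iff _ K).not.mpr (laguerre_ne_zero _ a)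
  left_ne_right h := by
    have := congrArg natDegree (FaithfulSMul.algebraMap_injective ℝ[X] K h)
    rw [natDegree_laguerre, natDegree_laguerre] at this
    omega
  deriv_left := by
    rw [hD, X_mul_derivative_laguerre_succ, map_sub, map_mul, map_mul]
  deriv_right := by
    have : derivative (laguerre N a) = derivative (laguerre (N + 1) a) + laguerre N a := by
      rw [derivative_laguerre_succ, sub_add_cancel]
    rw [hD, this, mul_add, X_mul_derivative_laguerre_succ]
    simp only [map_add, map_sub, map_mul]

/-- The numerator of the rational solution built from the Laguerre polynomials of degrees `N + 1`
and `N` with parameter `a`. -/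
def laguerreNumerator (N n : ℕ) (a : ℝ) : ℝ[X] :=
  derivHankelDet (laguerre (N + 1) a) (n + 1) * derivHankelDet (laguerre N a) n

/-- The denominator belonging to `laguerreNumerator`. -/
def laguerreDenominator (N n : ℕ) (a : ℝ) : ℝ[X] :=
  derivHankelDet (laguerre (N + 1) a) n * derivHankelDet (laguerre N a) (n + 1)

theorem pvPolynomial_laguerre {N n : ℕ} (hn : n ≤ N) (a : ℝ) :
    pvPolynomial ((N + 1 - n) ^ 2 / 2) (-(N + 1 + a + n) ^ 2 / 2) (a - 1)
      (laguerreNumerator N n a) (laguerreDenominator N n a) = 0 := by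
  set K := FractionRing ℝ[X]
  obtain ⟨_, hD⟩ := exists_isEulerDerivation ℝ K
  have hι := FaithfulSMul.algebraMap_injective ℝ[X] K
  have hchar := charZero_of_injective_algebraMap hι
  set A : ℕ → K := fun j => algebraMap ℝ[X] K (derivHankelDet (laguerre (N + 1) a) j)
  set B : ℕ → K := fun j => algebraMap ℝ[X] K (derivHankelDet (laguerre N a) j)
  have hA : IsTodaSequence (algebraMap ℝ[X] K X) N A :=
    hD.isTodaSequence_derivHankelDet (laguerre_ne_zero _ a) (by rw [natDegree_laguerre]; omega)
  have hB : IsTodaSequence (algebraMap ℝ[X] K X) N B :=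
    hD.isTodaSequence_derivHankelDet (laguerre_ne_zero _ a) (natDegree_laguerre N a).ge
  have hseed : PVState.IsSeed (algebraMap ℝ[X] K X) (algebraMap ℝ[X] K (C (N + 1 : ℝ)))
      (algebraMap ℝ[X] K (C (N + 1 + a))) (A 1) (B 1) := by
    simpa only [A, B, derivHankelDet_one] using isSeed_laguerre hD N a
  have hX : algebraMap ℝ[X] K X ≠ 0 := (map_ne_zero_iff _ hι).mpr X_ne_zero
  have hP₀ : laguerreNumerator N n a ≠ 0 := mul_ne_zero
    (ne_zero_of_map (hA.ne_zero (n + 1) (by omega))) (ne_zero_of_map (hB.ne_zero n (by omega)))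
  have hQ₀ : laguerreDenominator N n a ≠ 0 := mul_ne_zero
    (ne_zero_of_map (hA.ne_zero n (by omega))) (ne_zero_of_map (hB.ne_zero (n + 1) (by omega)))
  have hquot : algebraMap ℝ[X] K (laguerreNumerator N n a) /
      algebraMap ℝ[X] K (laguerreDenominator N n a) = todaQuotient A B n := by
    rw [laguerreNumerator, laguerreDenominator, map_mul, map_mul, todaQuotient]
  have hPQ : laguerreNumerator N n a ≠ laguerreDenominator N n a := fun h =>
    hseed.todaQuotient_ne_one hX hA hB hn <| by
      rw [← hquot, h, div_self ((map_ne_zero_iff _ hι).mpr hQ₀)]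
  rw [hD.pvPolynomial_eq_zero_iff hP₀ hQ₀ hPQ, hquot]
  have hC (r : ℝ) : algebraMap ℝ[X] K (C r) = (algebraMap ℝ[X] K).comp C r := rfl
  convert hseed.pvRelation_todaQuotient hX hA hB hn using 1 <;> simp only [hC]
  · simp only [map_div₀, map_pow, map_sub, map_natCast, map_ofNat]
  · simp only [map_div₀, map_pow, map_add, map_neg, map_natCast, map_ofNat]
  · rw [← map_sub, ← map_one ((algebraMap ℝ[X] K).comp C), ← map_sub]
    ring_nf

lemma pv_neg {α β γ : ℝ} {w : ℝ → ℝ} {z : ℝ} (h : PV α β γ w (-z)) :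
    PV α β (-γ) (fun y => w (-y)) z := by
  rw [PV] at h ⊢
  rw [iteratedDeriv_comp_neg, deriv_comp_neg, h]
  simp only [smul_eq_mul]
  rw [one_div_neg_eq_neg_one_div, neg_sq, neg_sq, div_neg]
  ring

/-- The rational function `w_{m,n}(z; μ) = T_{m-1,n} T_{m-1,n+1} / (T_{m,n} T_{m-2,n+1})`, where `T`
is `genLag` with parameter `μ`. -/
def genLagQuotient (m n : ℕ) (μ : ℝ) : ℝ → ℝ := fun z =>
  genLag ((m : ℤ) - 1) n μ z * genLag ((m : ℤ) - 1) (n + 1) μ z /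
    (genLag (m : ℤ) n μ z * genLag ((m : ℤ) - 2) (n + 1) μ z)

lemma genLag_numerator_eq_eval (i n : ℕ) (μ z : ℝ) :
    genLag (((i + 1 : ℕ) : ℤ) - 1) n μ z * genLag (((i + 1 : ℕ) : ℤ) - 1) (n + 1) μ z =
      (laguerreNumerator (i + n) n (μ + 1)).eval z := by
  rw [genLag_eq_eval_derivHankelDet (N := i + n) (by omega),
    genLag_eq_eval_derivHankelDet (N := i + n + 1) (by omega), mul_comm, ← eval_mul,
    laguerreNumerator]

lemma genLag_denominator_eq_eval (i n : ℕ) (μ z : ℝ) :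
    genLag ((i + 1 : ℕ) : ℤ) n μ z * genLag (((i + 1 : ℕ) : ℤ) - 2) (n + 1) μ z =
      (laguerreDenominator (i + n) n (μ + 1)).eval z := by
  rw [genLag_eq_eval_derivHankelDet (N := i + n + 1) (by omega),
    genLag_eq_eval_derivHankelDet (N := i + n) (by omega), ← eval_mul, laguerreDenominator]

theorem pv_genLagQuotient {m : ℕ} (hm : 1 ≤ m) (n : ℕ) (μ : ℝ) {z : ℝ} (hz : z ≠ 0)
    (hden : genLag (m : ℤ) n μ z * genLag ((m : ℤ) - 2) (n + 1) μ z ≠ 0)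
    (hw₀ : genLagQuotient m n μ z ≠ 0) (hw₁ : genLagQuotient m n μ z ≠ 1) :
    PV ((m : ℝ) ^ 2 / 2) (-((m : ℝ) + 2 * n + μ + 1) ^ 2 / 2) μ (genLagQuotient m n μ) z := by
  obtain ⟨i, rfl⟩ := Nat.exists_eq_add_of_le' hm
  have hw : genLagQuotient (i + 1) n μ = fun y => (laguerreNumerator (i + n) n (μ + 1)).eval y /
      (laguerreDenominator (i + n) n (μ + 1)).eval y := by
    funext y
    rw [genLagQuotient, genLag_numerator_eq_eval, genLag_denominator_eq_eval]
  rw [genLag_denominator_eq_eval] at hden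
  rw [hw] at hw₀ hw₁ ⊢
  have hpoly := pvPolynomial_laguerre (Nat.le_add_left n i) (μ + 1)
  rw [add_sub_cancel_right] at hpoly
  convert (pv_eval_div_iff _ _ _ hz hden hw₀ hw₁).mpr (by rw [hpoly, eval_zero]) using 1
  · push_cast; ring
  · push_cast; ring

end LaguerreSolution

/-- non-uniqueness of rational solutions of `P_V` for integer `μ = k ≥ -n`. -/
theorem pv_nonuniqueness (m n : ℕ) (hm : 1 ≤ m) (hn : 1 ≤ n) (k : ℤ) (hk : -(n : ℤ) ≤ k)
    (w wh : ℝ → ℝ)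
    (hw : w = fun z =>
      genLag ((m : ℤ) - 1) n (k : ℝ) z * genLag ((m : ℤ) - 1) (n + 1) (k : ℝ) z /
        (genLag (m : ℤ) n (k : ℝ) z * genLag ((m : ℤ) - 2) (n + 1) (k : ℝ) z))
    (hwh : wh = fun z =>
      genLag ((m : ℤ) - 1) ((n : ℤ) + k).toNat (-(k : ℝ)) (-z) *
          genLag ((m : ℤ) - 1) (((n : ℤ) + k).toNat + 1) (-(k : ℝ)) (-z) /
        (genLag (m : ℤ) ((n : ℤ) + k).toNat (-(k : ℝ)) (-z) *
          genLag ((m : ℤ) - 2) (((n : ℤ) + k).toNat + 1) (-(k : ℝ)) (-z))) :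
    (∀ z : ℝ, z ≠ 0 →
        genLag (m : ℤ) n (k : ℝ) z * genLag ((m : ℤ) - 2) (n + 1) (k : ℝ) z ≠ 0 →
        w z ≠ 0 → w z ≠ 1 →
        PV ((m : ℝ) ^ 2 / 2) (-((m : ℝ) + 2 * n + k + 1) ^ 2 / 2) (k : ℝ) w z)
      ∧ ∀ z : ℝ, z ≠ 0 →
        genLag (m : ℤ) ((n : ℤ) + k).toNat (-(k : ℝ)) (-z) *
            genLag ((m : ℤ) - 2) (((n : ℤ) + k).toNat + 1) (-(k : ℝ)) (-z) ≠ 0 →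
        wh z ≠ 0 → wh z ≠ 1 →
        PV ((m : ℝ) ^ 2 / 2) (-((m : ℝ) + 2 * n + k + 1) ^ 2 / 2) (k : ℝ) wh z := by
  replace hwh : wh = fun z => genLagQuotient m (n + k).toNat (-k) (-z) := hwh
  subst hw hwh
  refine ⟨fun z hz hden hw₀ hw₁ => pv_genLagQuotient hm n k hz hden hw₀ hw₁,
    fun z hz hden hw₀ hw₁ => ?_⟩
  have hN : (((n + k).toNat : ℕ) : ℝ) = n + k := by
    exact_mod_cast congrArg (Int.cast (R := ℝ)) (Int.toNat_of_nonneg (show 0 ≤ n + k by omega))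
  have hreflected := pv_neg
    (pv_genLagQuotient hm (n + k).toNat (-(k : ℝ)) (neg_ne_zero.mpr hz) hden hw₀ hw₁)
  rw [neg_neg, hN] at hreflected
  convert hreflected using 2
  ring
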